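/- arXiv:2104.10165 — 2 statements merged into one kernel-verified Lean document; each statement's English description precedes it below -/
import Mathlib

section
/- Every element of the group G is a unitary matrix (so G is contained in U(2)), but G contains an element of determinant -1 (namely d), so G is not contained in SU(2). -/
open Matrix Complex
open scoped MatrixGroups

noncomputable section

def iM : Matrix (Fin 2) (Fin 2) ℂ := !![0, 1; -1, 0]
def jM : Matrix (Fin 2) (Fin 2) ℂ := !![0, Complex.I; Complex.I, 0]
def kM : Matrix (Fin 2) (Fin 2) ℂ := !![Complex.I, 0; 0, -Complex.I]
def wM : Matrix (Fin 2) (Fin 2) ℂ :=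
  (1 / 2 : ℂ) • !![-1 + Complex.I, 1 + Complex.I; -1 + Complex.I, -1 - Complex.I]
def cM : Matrix (Fin 2) (Fin 2) ℂ :=
  ((Real.sqrt 2 : ℂ))⁻¹ • !![-Complex.I, Complex.I; Complex.I, Complex.I]
def dM : Matrix (Fin 2) (Fin 2) ℂ :=
  ((Real.sqrt 2 : ℂ))⁻¹ • !![-1, 1; 1, 1]

def G : Subgroup (GL (Fin 2) ℂ) :=
  Subgroup.closure {g : GL (Fin 2) ℂ |
    (g : Matrix (Fin 2) (Fin 2) ℂ) = iM ∨
    (g : Matrix (Fin 2) (Fin 2) ℂ) = wM ∨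
    (g : Matrix (Fin 2) (Fin 2) ℂ) = dM}

theorem sqrt_two_inv_mul_self : ((Real.sqrt 2 : ℂ))⁻¹ * ((Real.sqrt 2 : ℂ))⁻¹ = 1 / 2 := by
  rw [← mul_inv, ← Complex.ofReal_mul, Real.mul_self_sqrt (by norm_num)]
  norm_num

theorem dM_mul_self : dM * dM = 1 := by
  have h := sqrt_two_inv_mul_self
  unfold dM
  rw [Matrix.smul_mul, Matrix.mul_smul, smul_smul, h]
  ext a b
  fin_cases a <;> fin_cases b <;> norm_num [Matrix.mul_apply, Fin.sum_univ_two]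

theorem dM_star : star dM = dM := by
  ext a b
  fin_cases a <;> fin_cases b <;> simp [dM, Matrix.star_apply]

theorem iM_unitary : iM ∈ Matrix.unitaryGroup (Fin 2) ℂ := by
  rw [Matrix.mem_unitaryGroup_iff]
  ext a b
  fin_cases a <;> fin_cases b <;>
    simp [iM, Matrix.mul_apply, Fin.sum_univ_two, Matrix.star_apply]

theorem wM_unitary : wM ∈ Matrix.unitaryGroup (Fin 2) ℂ := by
  rw [Matrix.mem_unitaryGroup_iff]
  ext a b
  fin_cases a <;> fin_cases b <;>
    simp [wM, Matrix.mul_apply, Fin.sum_univ_two, Matrix.star_apply] <;>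
    ring_nf <;> simp <;> norm_num [show (starRingEnd ℂ) 2 = 2 from map_ofNat _ 2]

theorem dM_unitary : dM ∈ Matrix.unitaryGroup (Fin 2) ℂ := by
  rw [Matrix.mem_unitaryGroup_iff, dM_star, dM_mul_self]

theorem G_in_U2_not_in_SU2 :
    (∀ g ∈ G, (g : Matrix (Fin 2) (Fin 2) ℂ) ∈ Matrix.unitaryGroup (Fin 2) ℂ) ∧
    (∃ g ∈ G, (g : Matrix (Fin 2) (Fin 2) ℂ) = dM) ∧
    dM.det = -1 := by
  refine ⟨?_, ?_, ?_⟩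
  · intro g hg
    unfold G at hg
    induction hg using Subgroup.closure_induction with
    | mem x hx =>
      rcases hx with h | h | h <;> rw [h]
      · exact iM_unitary
      · exact wM_unitary
      · exact dM_unitary
    | one => exact one_mem _
    | mul x y _ _ hx hy => exact mul_mem hx hy
    | inv x _ hx =>
      have h1 := Matrix.mem_unitaryGroup_iff.mp hx
      have h2 : ((x⁻¹ : GL (Fin 2) ℂ) : Matrix (Fin 2) (Fin 2) ℂ) = star (x : Matrix (Fin 2) (Fin 2) ℂ) :=
        Units.inv_eq_of_mul_eq_one_right h1
      rw [h2]
      exact Unitary.star_mem hx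
  · exact ⟨⟨dM, dM, dM_mul_self, dM_mul_self⟩,
      Subgroup.subset_closure (Or.inr (Or.inr rfl)), rfl⟩
  · have h := sqrt_two_inv_mul_self
    simp only [dM, Matrix.det_smul, Fintype.card_fin, Matrix.det_fin_two_of, pow_two, h]
    norm_num
end
end

section
/- The subgroup of GL(3,ℝ) generated by the two matrices P := !![0,1,0;0,0,1;1,0,0] and N := !![1,0,0;0,0,1;0,-1,0] consists entirely of special orthogonal matrices (orthogonal of determinant 1), has order 24, and is isomorphic to the symmetric group on 4 letters. -/
open Matrix
open scoped MatrixGroups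

noncomputable section

def P : Matrix (Fin 3) (Fin 3) ℝ := !![0, 1, 0; 0, 0, 1; 1, 0, 0]
def N : Matrix (Fin 3) (Fin 3) ℝ := !![1, 0, 0; 0, 0, 1; 0, -1, 0]

def S : Subgroup (GL (Fin 3) ℝ) :=
  Subgroup.closure {g : GL (Fin 3) ℝ |
    (g : Matrix (Fin 3) (Fin 3) ℝ) = P ∨
    (g : Matrix (Fin 3) (Fin 3) ℝ) = N}

/-- The four diagonals of the cube. -/
def cubeDiag : Fin 4 → Fin 3 → ℤ :=
  ![![1, 1, 1], ![1, -1, -1], ![-1, 1, -1], ![-1, -1, 1]]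

/-- The rotation permuting the diagonals of the cube by `σ`, as an integer matrix. -/
def cubeMat (σ : Equiv.Perm (Fin 4)) : Matrix (Fin 3) (Fin 3) ℤ :=
  fun i j => (Equiv.Perm.sign σ : ℤ) * (∑ k, cubeDiag (σ k) i * cubeDiag k j) / 4

theorem cubeMat_one : cubeMat 1 = 1 := by decide +kernel

theorem cubeMat_inj : ∀ σ, cubeMat σ = 1 → σ = 1 := by decide +kernel

theorem cubeMat_orth : ∀ σ, cubeMat σ * (cubeMat σ)ᵀ = 1 := by decide +kernel

theorem cubeMat_det : ∀ σ, (cubeMat σ).det = 1 := by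
  simp only [Matrix.det_fin_three]
  decide +kernel

/-- The permutation of the diagonals induced by `P`. -/
def permP : Equiv.Perm (Fin 4) := Equiv.swap 1 2 * Equiv.swap 1 3

/-- The permutation of the diagonals induced by `N`. -/
def permN : Equiv.Perm (Fin 4) := Equiv.swap 0 2 * Equiv.swap 0 1 * Equiv.swap 0 3

theorem cubeMat_permP : cubeMat permP = !![0, 1, 0; 0, 0, 1; 1, 0, 0] := by decide +kernel

theorem cubeMat_permN : cubeMat permN = !![1, 0, 0; 0, 0, 1; 0, -1, 0] := by decide +kernel

theorem perm_word : ∀ σ : Equiv.Perm (Fin 4), ∃ a : Fin 4, ∃ b : Fin 3, ∃ c : Fin 4, ∃ d : Fin 3,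
    σ = permN ^ (a : ℕ) * permP ^ (b : ℕ) * permN ^ (c : ℕ) * permP ^ (d : ℕ) := by
  decide +kernel

theorem cubeMat_permP_mul : ∀ τ, cubeMat (permP * τ) = cubeMat permP * cubeMat τ := by
  decide +kernel

theorem cubeMat_permN_mul : ∀ τ, cubeMat (permN * τ) = cubeMat permN * cubeMat τ := by
  decide +kernel

/-- The permutations on which left multiplication is compatible with `cubeMat`. -/
def cubeMulSubmonoid : Submonoid (Equiv.Perm (Fin 4)) where
  carrier := {σ | ∀ τ, cubeMat (σ * τ) = cubeMat σ * cubeMat τ}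
  one_mem' := fun τ => by rw [one_mul, cubeMat_one, one_mul]
  mul_mem' := fun {a b} ha hb τ => by
    rw [mul_assoc, ha, hb, ha, mul_assoc]

theorem cubeMat_mul (σ τ : Equiv.Perm (Fin 4)) :
    cubeMat (σ * τ) = cubeMat σ * cubeMat τ := by
  have hp : permP ∈ cubeMulSubmonoid := cubeMat_permP_mul
  have hn : permN ∈ cubeMulSubmonoid := cubeMat_permN_mul
  have h : σ ∈ cubeMulSubmonoid := by
    obtain ⟨a, b, c, d, rfl⟩ := perm_word σ
    exact mul_mem (mul_mem (mul_mem (pow_mem hn _) (pow_mem hp _)) (pow_mem hn _)) (pow_mem hp _)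
  exact h τ

theorem closure_perm : Subgroup.closure {permP, permN} = ⊤ := by
  rw [eq_top_iff]
  intro σ _
  have hp : permP ∈ Subgroup.closure {permP, permN} := Subgroup.subset_closure (by simp)
  have hn : permN ∈ Subgroup.closure {permP, permN} := Subgroup.subset_closure (by simp)
  obtain ⟨a, b, c, d, rfl⟩ := perm_word σ
  exact mul_mem (mul_mem (mul_mem (pow_mem hn _) (pow_mem hp _)) (pow_mem hn _)) (pow_mem hp _)

/-- The integral rotation representation of the symmetric group. -/
def cubeHom : Equiv.Perm (Fin 4) →* Matrix (Fin 3) (Fin 3) ℤ where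
  toFun := cubeMat
  map_one' := cubeMat_one
  map_mul' := cubeMat_mul

/-- The real rotation representation of the symmetric group. -/
def cubeRep : Equiv.Perm (Fin 4) →* GL (Fin 3) ℝ :=
  MonoidHom.toHomUnits
    (((Int.castRingHom ℝ).mapMatrix : _ →+* Matrix (Fin 3) (Fin 3) ℝ).toMonoidHom.comp cubeHom)

theorem cubeRep_coe (σ : Equiv.Perm (Fin 4)) :
    (cubeRep σ : Matrix (Fin 3) (Fin 3) ℝ) = (Int.castRingHom ℝ).mapMatrix (cubeMat σ) := rfl

theorem cubeRep_P : (cubeRep permP : Matrix (Fin 3) (Fin 3) ℝ) = P := by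
  rw [cubeRep_coe, cubeMat_permP, P]
  ext i j
  fin_cases i <;> fin_cases j <;> simp

theorem cubeRep_N : (cubeRep permN : Matrix (Fin 3) (Fin 3) ℝ) = N := by
  rw [cubeRep_coe, cubeMat_permN, N]
  ext i j
  fin_cases i <;> fin_cases j <;> simp

theorem cubeRep_injective : Function.Injective cubeRep := by
  rw [injective_iff_map_eq_one]
  intro σ h
  apply cubeMat_inj
  have h2 := congrArg (fun g : GL (Fin 3) ℝ => (g : Matrix (Fin 3) (Fin 3) ℝ)) h
  simp only [cubeRep_coe, Units.val_one] at h2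
  rw [← map_one ((Int.castRingHom ℝ).mapMatrix)] at h2
  exact Matrix.map_injective Int.cast_injective h2

theorem cubeRep_range : cubeRep.range = S := by
  rw [MonoidHom.range_eq_map, ← closure_perm, MonoidHom.map_closure, S, Set.image_pair]
  congr 1
  ext g
  simp only [Set.mem_insert_iff, Set.mem_singleton_iff, Set.mem_ofPred_eq,
    ← cubeRep_P, ← cubeRep_N, Units.val_inj]

theorem rotation_group_of_cube :
    (∀ g ∈ S, (g : Matrix (Fin 3) (Fin 3) ℝ) ∈ Matrix.orthogonalGroup (Fin 3) ℝ ∧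
      (g : Matrix (Fin 3) (Fin 3) ℝ).det = 1) ∧
    Nat.card S = 24 ∧
    Nonempty (S ≃* Equiv.Perm (Fin 4)) := by
  have e : Equiv.Perm (Fin 4) ≃* S :=
    (MonoidHom.ofInjective cubeRep_injective).trans (MulEquiv.subgroupCongr cubeRep_range)
  refine ⟨?_, ?_, ⟨e.symm⟩⟩
  · intro g hg
    rw [← cubeRep_range] at hg
    obtain ⟨σ, rfl⟩ := hg
    rw [cubeRep_coe]
    constructor
    · rw [Matrix.mem_orthogonalGroup_iff]
      have h := congrArg (Int.castRingHom ℝ).mapMatrix (cubeMat_orth σ)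
      rw [map_mul, map_one] at h
      exact h
    · rw [← RingHom.map_det, cubeMat_det, map_one]
  · rw [← Nat.card_congr e.toEquiv, Nat.card_eq_fintype_card, Fintype.card_perm]
    rfl
end
end
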